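/- Let n be an odd positive integer, q = 7^n, and let F_q be the field with q elements. Let E be a nonsingular Weierstrass curve over F_q and a = q + 1 − N, where N is the number of F_q-rational points of E (including infinity). Assume a ≡ 9, 15 or 18 (mod 21). Then there exist a1, a2 ∈ F_q such that the projective plane quartic C_{a1,a2} : a1·T1⁴ + a2·T1²·T2 + 2·T1·T3 + T2² = 0 is smooth and the number of points [X:Y:Z] ∈ ℙ²(F_q) on C_{a1,a2} equals q + 1 − 3·a. -/

import Mathlib

/-!
Write `χ` for the quadratic character of `F`. In characteristic 7 the curve `E` has a model
`y² = x³ + A x + B` (`short_form`), and its trace is `a = -∑ χ(x³ + A x + B)` (`card_points`).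

*Counting the quartic.* The two points `[1 : 2 : 4]`, `[1 : 4 : 2]` have `T1 = 0`
(`quarticCard_eq`); the other points are normalized by `T1 = 1`. Then `T3` is determined by
`t = T2`, and the coordinates of a point are, in some order, the roots of the cubic
`X³ - X² + t X - T3`. By Stickelberger's theorem (`sum_roots_cubic`) the number of orderings of
rational roots is expressed through the number of roots and the character of the discriminant.
Summing over `t` (`card_affine`) gives `q` plus twice a character sum of a cubic in `x` plus a
character sum of a quartic in `t`; the latter reduces to the character sum of its cubic resolvent
(`sum_quartic`). Geometrically, the Jacobian is isogenous to `E₁ × E₂ × E₂` for two elliptic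
curves, and it suffices to choose `a1`, `a2` so that both are isomorphic to `E`.

*Using `a` modulo 7.* The hypothesis makes `a` a nonzero square modulo 7. Modulo 7 the trace is the
norm of the Hasse invariant `3 B` (`coeff_hasse`, `trace_mod_seven`), so `-B` is a nonzero square
(`neg_B_isSquare`).

*Using `a` modulo 3.* As `3 ∣ a` and `q ≡ 1` modulo 3, neither `E` nor its quadratic twist has a
rational point of order 3, so the 3-division polynomial has no root in `F`. Its cubic resolvent is
`z³ = -(A³ + 5 B²)`; if this had no rational solution, Frobenius would fix a root of the 3-division
polynomial (`exists_root_of_not_cube`). So `z` exists in `F`, and after multiplying it by a cube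
root of unity `z + A` is a square `α²` (`exists_resolvent`).

From `B = -b²` and `α` the parameters `a1`, `a2` are given by explicit formulas (`exists_params`).
Smoothness follows because a singular point has two equal coordinates, hence either makes the
cubic above singular or is `[1 : 1 : 1]`, and both are excluded (`smooth_of_params`).
-/

open MvPolynomial

/-- The plane quartic `a1·T1⁴ + a2·T1²·T2 + 2·T1·T3 + T2²` as a polynomial in three
homogeneous coordinates, where `T1 = X+Y+Z`, `T2 = XY+YZ+ZX`, `T3 = XYZ`. -/
noncomputable def quarticC (F : Type*) [Field F] (a1 a2 : F) : MvPolynomial (Fin 3) F :=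
  C a1 * (X 0 + X 1 + X 2) ^ 4
    + C a2 * (X 0 + X 1 + X 2) ^ 2 * (X 0 * X 1 + X 1 * X 2 + X 2 * X 0)
    + 2 * (X 0 + X 1 + X 2) * (X 0 * X 1 * X 2)
    + (X 0 * X 1 + X 1 * X 2 + X 2 * X 0) ^ 2

/-- A plane quartic is smooth if, over an algebraic closure, the quartic form and its three
partial derivatives have no common nontrivial zero. -/
def QuarticSmooth (F : Type*) [Field F] (q : MvPolynomial (Fin 3) F) : Prop :=
  ¬ ∃ v : Fin 3 → AlgebraicClosure F, v ≠ 0 ∧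
      eval v (MvPolynomial.map (algebraMap F (AlgebraicClosure F)) q) = 0 ∧
      ∀ i : Fin 3,
        eval v (MvPolynomial.map (algebraMap F (AlgebraicClosure F)) (pderiv i q)) = 0

/-- The number of points of the projective plane curve `q = 0` over `F`. -/
noncomputable def quarticCard (F : Type*) [Field F] (q : MvPolynomial (Fin 3) F) : ℕ :=
  Nat.card {P : Projectivization F (Fin 3 → F) // eval P.rep q = 0}

/-! ### Character sums and point counts -/

section CharSums

variable {F : Type*} [Field F] [Fintype F] [DecidableEq F]

/-- A quadratic with leading coefficient `a ≠ 0` has `1 + χ(b² - 4ac)` roots. -/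
lemma card_quadratic (h2 : ringChar F ≠ 2) (a b c : F) (ha : a ≠ 0) :
    ((Finset.univ.filter fun y : F => a * y ^ 2 + b * y + c = 0).card : ℤ)
      = quadraticChar F (b ^ 2 - 4 * a * c) + 1 := by
  have h2' : (2 : F) ≠ 0 := Ring.two_ne_zero h2
  rw [← quadraticChar_card_sqrts h2]
  congr 1
  refine Finset.card_bij (fun y _ => 2 * a * y + b) ?_ ?_ ?_
  · intro y hy
    simp only [Finset.mem_filter, Finset.mem_univ, true_and, Set.mem_toFinset,
      Set.mem_ofPred_eq] at hy ⊢
    linear_combination 4 * a * hy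
  · intro y _ z _ h
    have h3 : (2 * a) * (y - z) = 0 := by linear_combination h
    have := (mul_eq_zero.mp h3).resolve_left (mul_ne_zero h2' ha)
    linear_combination this
  · intro w hw
    simp only [Set.mem_toFinset, Set.mem_ofPred_eq] at hw
    refine ⟨(w - b) / (2 * a), ?_, ?_⟩
    · simp only [Finset.mem_filter, Finset.mem_univ, true_and]
      field_simp
      linear_combination hw
    · field_simp
      ring

lemma card_pairs {α β : Type*} [Fintype α] [Fintype β] [DecidableEq α] (P : α → β → Prop)
    [∀ x y, Decidable (P x y)] :
    (Finset.univ.filter fun p : α × β => P p.1 p.2).card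
      = ∑ x, (Finset.univ.filter fun y => P x y).card := by
  rw [← Finset.univ_product_univ]
  simp_rw [Finset.card_filter]
  rw [Finset.sum_product]

/-- Point count of a Weierstrass curve: for each `x`, solve a quadratic in `y`, whose discriminant
is the two-torsion cubic. -/
lemma card_points (h2 : ringChar F ≠ 2) (W : WeierstrassCurve F) (hW : W.Δ ≠ 0) :
    (Nat.card W.toAffine.Point : ℤ) = Fintype.card F + 1
      + ∑ x : F, quadraticChar F (4 * x ^ 3 + W.b₂ * x ^ 2 + 2 * W.b₄ * x + W.b₆) := by
  classical
  have : W.IsElliptic := ⟨isUnit_iff_ne_zero.mpr hW⟩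
  have h1 : Nat.card W.toAffine.Point
      = Nat.card {p : F × F // W.toAffine.Nonsingular p.1 p.2} + 1 := by
    rw [Nat.card_congr (WeierstrassCurve.Affine.nonsingularPointEquiv W.toAffine)]
    exact Finite.card_option
  have h3 : Nat.card {p : F × F // W.toAffine.Nonsingular p.1 p.2}
      = (Finset.univ.filter fun p : F × F => 1 * p.2 ^ 2 + (W.a₁ * p.1 + W.a₃) * p.2
          + -(p.1 ^ 3 + W.a₂ * p.1 ^ 2 + W.a₄ * p.1 + W.a₆) = 0).card := by
    rw [Nat.card_eq_fintype_card, Fintype.card_subtype]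
    congr 1
    ext p
    simp only [Finset.mem_filter, Finset.mem_univ, true_and]
    rw [← WeierstrassCurve.Affine.equation_iff_nonsingular, WeierstrassCurve.Affine.equation_iff']
    simp only [WeierstrassCurve.toAffine]
    constructor <;> intro h <;> linear_combination h
  rw [h1, h3, card_pairs (fun x y : F => 1 * y ^ 2 + (W.a₁ * x + W.a₃) * y
          + -(x ^ 3 + W.a₂ * x ^ 2 + W.a₄ * x + W.a₆) = 0)]
  push_cast
  simp_rw [card_quadratic h2 _ _ _ (one_ne_zero)]
  rw [Finset.sum_add_distrib]
  simp only [Finset.sum_const, Finset.card_univ, nsmul_eq_mul, mul_one]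
  have : ∀ x : F, (W.a₁ * x + W.a₃) ^ 2 - 4 * -(x ^ 3 + W.a₂ * x ^ 2 + W.a₄ * x + W.a₆)
      = 4 * x ^ 3 + W.b₂ * x ^ 2 + 2 * W.b₄ * x + W.b₆ := by
    intro x
    simp only [WeierstrassCurve.b₂, WeierstrassCurve.b₄, WeierstrassCurve.b₆]
    ring
  simp_rw [this]
  ring

/-- The quartic `y² = t⁴ + p t² + r t + s` and its cubic resolvent have the same character sum up
to the two points at infinity of the quartic: put `z = y - t²` and solve for `t`. -/
lemma sum_quartic (h2 : ringChar F ≠ 2) (p r s : F) (hns : r ≠ 0 ∨ p ^ 2 ≠ 4 * s) :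
    ∑ t : F, quadraticChar F (t ^ 4 + p * t ^ 2 + r * t + s)
      = -1 + ∑ z : F, quadraticChar F (r ^ 2 - 4 * (2 * z - p) * (z ^ 2 - s)) := by
  have h2' : (2 : F) ≠ 0 := Ring.two_ne_zero h2
  have e1 : ((Finset.univ.filter fun x : F × F =>
      (2 * x.2 - p) * x.1 ^ 2 + (-r) * x.1 + (x.2 ^ 2 - s) = 0).card : ℤ)
      = Fintype.card F + ∑ t : F, quadraticChar F (t ^ 4 + p * t ^ 2 + r * t + s) := by
    rw [card_pairs (fun t z : F => (2 * z - p) * t ^ 2 + (-r) * t + (z ^ 2 - s) = 0)]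
    push_cast
    have : ∀ t : F, ((Finset.univ.filter fun z : F =>
        (2 * z - p) * t ^ 2 + (-r) * t + (z ^ 2 - s) = 0).card : ℤ)
        = quadraticChar F (t ^ 4 + p * t ^ 2 + r * t + s) + 1 := by
      intro t
      have h := card_quadratic h2 1 (2 * t ^ 2) (-(p * t ^ 2 + r * t + s)) one_ne_zero
      have e : (2 * t ^ 2) ^ 2 - 4 * 1 * (-(p * t ^ 2 + r * t + s))
          = 2 ^ 2 * (t ^ 4 + p * t ^ 2 + r * t + s) := by ring
      rw [e, map_mul, quadraticChar_sq_one' h2', one_mul] at h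
      rw [← h]
      congr 3
      ext z
      constructor <;> intro h <;> linear_combination h
    simp_rw [this]
    rw [Finset.sum_add_distrib]
    simp [add_comm]
  have e2 : ((Finset.univ.filter fun x : F × F =>
      (2 * x.2 - p) * x.1 ^ 2 + (-r) * x.1 + (x.2 ^ 2 - s) = 0).card : ℤ)
      = Fintype.card F - 1
        + ∑ z : F, quadraticChar F (r ^ 2 - 4 * (2 * z - p) * (z ^ 2 - s)) := by
    have sw : (Finset.univ.filter fun x : F × F =>
        (2 * x.2 - p) * x.1 ^ 2 + (-r) * x.1 + (x.2 ^ 2 - s) = 0).card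
        = (Finset.univ.filter fun x : F × F =>
        (2 * x.1 - p) * x.2 ^ 2 + (-r) * x.2 + (x.1 ^ 2 - s) = 0).card := by
      refine Finset.card_bij (fun x _ => x.swap) ?_ ?_ ?_
      · rintro ⟨x, y⟩ h; simpa using h
      · rintro ⟨x, y⟩ _ ⟨x', y'⟩ _ h
        simpa [and_comm] using h
      · rintro ⟨x, y⟩ h
        exact ⟨(y, x), by simpa using h, rfl⟩
    rw [sw, card_pairs (fun z t : F => (2 * z - p) * t ^ 2 + (-r) * t + (z ^ 2 - s) = 0)]
    push_cast
    have : ∀ z : F, ((Finset.univ.filter fun t : F =>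
        (2 * z - p) * t ^ 2 + (-r) * t + (z ^ 2 - s) = 0).card : ℤ)
        = quadraticChar F (r ^ 2 - 4 * (2 * z - p) * (z ^ 2 - s)) + 1
          - if z = p / 2 then 1 else 0 := by
      intro z
      split_ifs with hz
      · have hz' : 2 * z - p = 0 := by rw [hz]; field_simp; ring
        rw [hz']
        by_cases hr : r = 0
        · have hp := hns.resolve_left (not_not.mpr hr)
          have : z ^ 2 - s ≠ 0 := by
            intro h0
            apply hp
            linear_combination 4 * h0 - (2 * z + p) * hz'
          simp [hr, this]
        · have : (Finset.univ.filter fun t : F => 0 * t ^ 2 + (-r) * t + (z ^ 2 - s) = 0)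
              = {(z ^ 2 - s) / r} := by
            ext t
            simp only [Finset.mem_filter, Finset.mem_univ, true_and, Finset.mem_singleton]
            rw [eq_div_iff hr]
            constructor <;> intro h <;> linear_combination -h
          rw [this]
          simp [quadraticChar_sq_one' hr]
      · have hz' : 2 * z - p ≠ 0 := by
          intro h; apply hz; field_simp; linear_combination h
        rw [card_quadratic h2 _ _ _ hz', neg_sq]
        ring
    simp_rw [this]
    rw [Finset.sum_sub_distrib, Finset.sum_add_distrib]
    simp
    ring
  linarith

end CharSums


/-! ### The 3-division polynomial -/

section ThreeTorsion

variable {F : Type*} [Field F] [Fintype F]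

/-- The fixed points of the `F`-Frobenius on an extension of `F` are the elements of `F`. -/
lemma exists_of_pow_card_eq {K : Type*} [Field K] [Algebra F K] (x : K)
    (hx : x ^ Fintype.card F = x) : ∃ y : F, algebraMap F K y = x := by
  have hq : 1 < Fintype.card F := Fintype.one_lt_card
  have hdeg := FiniteField.X_pow_card_sub_X_natDegree_eq F hq
  have hmonic : (Polynomial.X ^ Fintype.card F - Polynomial.X : Polynomial F).Monic :=
    Polynomial.monic_X_pow_sub (by rw [Polynomial.degree_X]; exact_mod_cast hq)
  have hp := Polynomial.prod_multiset_X_sub_C_of_monic_of_roots_card_eq hmonic (by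
    rw [FiniteField.roots_X_pow_card_sub_X, hdeg]; rfl)
  rw [FiniteField.roots_X_pow_card_sub_X] at hp
  have h0 := congrArg (Polynomial.aeval x) hp
  simp only [map_sub, map_pow, Polynomial.aeval_X, hx, sub_self] at h0
  rw [map_multiset_prod, Multiset.map_map, Multiset.prod_eq_zero_iff, Multiset.mem_map] at h0
  obtain ⟨y, _, hy⟩ := h0
  refine ⟨y, ?_⟩
  simp only [Function.comp, map_sub, Polynomial.aeval_X, Polynomial.aeval_C] at hy
  exact (sub_eq_zero.mp hy).symm

/-- The cubic resolvent of the 3-division polynomial `x⁴ + 2Ax² + 4Bx + 2A²` is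
`z³ = -(A³ + 5B²)` (a constant times the discriminant). If that is not a cube then Frobenius
permutes the three resolvent roots cyclically, hence fixes a root of the quartic. -/
lemma exists_root_of_not_cube_aux (K : Type*) [Field K] [Algebra F K] [IsAlgClosed K]
    [CharP F 7] (A B : F) (hB : B ≠ 0) (hz : ¬ ∃ z : F, z ^ 3 = -(A ^ 3 + 5 * B ^ 2)) :
    ∃ x : F, x ^ 4 + 2 * A * x ^ 2 + 4 * B * x + 2 * A ^ 2 = 0 := by
  have : CharP K 7 := charP_of_injective_algebraMap' F 7
  obtain ⟨φ, hφ⟩ : ∃ φ : K →ₐ[F] K, ∀ x, φ x = x → ∃ y : F, algebraMap F K y = x :=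
    ⟨FiniteField.frobeniusAlgHom F K, fun x hx => exists_of_pow_card_eq x hx⟩
  obtain ⟨A', hA'⟩ : ∃ A' : K, A' = algebraMap F K A := ⟨_, rfl⟩
  obtain ⟨B', hB'⟩ : ∃ B' : K, B' = algebraMap F K B := ⟨_, rfl⟩
  have hφA : φ A' = A' := by rw [hA', AlgHom.commutes]
  have hφB : φ B' = B' := by rw [hB', AlgHom.commutes]
  have hB0 : B' ≠ 0 := by rw [hB']; simpa using hB
  have inj : Function.Injective (algebraMap F K) := (algebraMap F K).injective
  obtain ⟨z, hz3⟩ := IsAlgClosed.exists_pow_nat_eq (-(A' ^ 3 + 5 * B' ^ 2)) (n := 3) (by norm_num)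
  have hφz : φ z ≠ z := by
    intro h
    obtain ⟨y, rfl⟩ := hφ z h
    refine hz ⟨y, inj ?_⟩
    simp only [map_pow, hz3, map_neg, map_add, map_mul, map_ofNat, hA', hB']
  have hφz3 : φ z ^ 3 = z ^ 3 := by
    rw [← map_pow, hz3]; simp [hφA, hφB, map_ofNat]
  -- the primitive cube roots of unity, 2 and 4, are rational in characteristic 7
  obtain ⟨w, hw, hφw, hw1⟩ : ∃ w : K, φ z = w * z ∧ φ w = w ∧ w ^ 2 + w + 1 = 0 := by
    have : (φ z - z) * ((φ z - 2 * z) * (φ z - 4 * z)) = 0 := by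
      have : (7 : K) = 0 := by exact_mod_cast CharP.cast_eq_zero K 7
      linear_combination hφz3 + (-φ z ^ 2 * z + 2 * φ z * z ^ 2 - z ^ 3) * this
    rcases mul_eq_zero.mp ((mul_eq_zero.mp this).resolve_left (sub_ne_zero.mpr hφz)) with h | h
    · exact ⟨2, by linear_combination h, map_ofNat φ 2, by grind⟩
    · exact ⟨4, by linear_combination h, map_ofNat φ 4, by grind⟩
  obtain ⟨α, hα⟩ := IsAlgClosed.exists_pow_nat_eq (z + A') (n := 2) (by norm_num)
  have hβ : φ α ^ 2 = w * z + A' := by rw [← map_pow, hα, map_add, hw, hφA]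
  have hγ : φ (φ α) ^ 2 = w ^ 2 * z + A' := by
    rw [← map_pow, hβ, map_add, map_mul, hw, hφA, hφw]; ring
  generalize hβd : φ α = β at hβ hγ
  generalize hγd : φ β = γ at hγ
  have hN : (α * β * γ) ^ 2 = (4 * B') ^ 2 := by
    have : (α * β * γ) ^ 2 = (z + A') * (w * z + A') * (w ^ 2 * z + A') := by
      rw [← hα, ← hβ, ← hγ]; ring
    rw [this]; grind
  have h4 : (4 : K) * B' ≠ 0 := by
    refine mul_ne_zero ?_ hB0
    intro h
    have h1 : (1 : K) = 0 := by grind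
    exact one_ne_zero h1
  obtain ⟨ε, hε, hε2, hφε⟩ : ∃ ε : K, α * β * γ = -4 * B' * ε ∧ ε ^ 2 = 1 ∧ φ ε = ε := by
    rcases sq_eq_sq_iff_eq_or_eq_neg.mp hN with h | h
    · exact ⟨-1, by rw [h]; ring, by ring, by simp⟩
    · exact ⟨1, by rw [h]; ring, by ring, by simp⟩
  have hα3 : φ γ = α := by
    have h1 : β * γ * φ γ = β * γ * α := by
      have : φ (α * β * γ) = α * β * γ := by
        rw [hε]; simp [hφB, hφε, map_ofNat]
      rw [map_mul, map_mul, hβd, hγd] at this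
      rw [this]; ring
    refine mul_left_cancel₀ ?_ h1
    intro h0
    apply h4
    have h5 : (4 * B') ^ 2 = 0 := by rw [← hN, mul_assoc, h0]; ring
    exact pow_eq_zero_iff (two_ne_zero) |>.mp h5
  -- `α β γ = -4 B ε`, so this is the root of the quartic given by Ferrari's formula
  obtain ⟨x, hx⟩ := hφ (4 * ε * (α + β + γ)) (by
    simp only [map_mul, map_add, map_ofNat, hβd, hγd, hα3, hφε]; ring)
  refine ⟨x, inj ?_⟩
  have key : (α + β + γ) ^ 4 - 6 * A' * (α + β + γ) ^ 2 - 8 * (α + β + γ) * (α * β * γ)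
      - 3 * A' ^ 2 = 0 := by
    have s1 : α ^ 2 + β ^ 2 + γ ^ 2 = 3 * A' := by rw [hα, hβ, hγ]; linear_combination z * hw1
    have s2 : α ^ 2 * β ^ 2 + β ^ 2 * γ ^ 2 + γ ^ 2 * α ^ 2 = 3 * A' ^ 2 := by
      rw [hα, hβ, hγ]
      linear_combination (w * z ^ 2 + 2 * A' * z) * hw1
    linear_combination 4 * s2 + (2 * (α + β + γ) ^ 2 - (α ^ 2 + β ^ 2 + γ ^ 2)
      - 3 * A') * s1
  simp only [map_add, map_mul, map_pow, map_ofNat, map_zero, hx, ← hA', ← hB']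
  rw [hε] at key
  generalize α + β + γ = s at key
  clear * - key hε2 this
  have e4 : ε ^ 4 = 1 := by linear_combination (ε ^ 2 + 1) * hε2
  grind

lemma exists_root_of_not_cube [CharP F 7] (A B : F) (hB : B ≠ 0)
    (hz : ¬ ∃ z : F, z ^ 3 = -(A ^ 3 + 5 * B ^ 2)) :
    ∃ x : F, x ^ 4 + 2 * A * x ^ 2 + 4 * B * x + 2 * A ^ 2 = 0 :=
  exists_root_of_not_cube_aux (AlgebraicClosure F) A B hB hz

/-- A root `x` of the 3-division polynomial which is the abscissa of a rational point `(x, y)` makes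
that point one of order 3, so 3 divides the number of points. -/
lemma three_dvd_of_root [DecidableEq F] [CharP F 7] (A B x y : F)
    (hΔ : 4 * A ^ 3 + 27 * B ^ 2 ≠ 0) (hy : y ^ 2 = x ^ 3 + A * x + B)
    (hx : x ^ 4 + 2 * A * x ^ 2 + 4 * B * x + 2 * A ^ 2 = 0) :
    (3 : ℤ) ∣ Fintype.card F + 1 + ∑ x : F, quadraticChar F (x ^ 3 + A * x + B) := by
  have h2 : ringChar F ≠ 2 := by rw [ringChar.eq F 7]; norm_num
  have h2' : (2 : F) ≠ 0 := Ring.two_ne_zero h2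
  let W : WeierstrassCurve F := ⟨0, 0, 0, A, B⟩
  have hW : W.Δ ≠ 0 := by
    intro h; apply hΔ
    have : W.Δ = 2 ^ 4 * -(4 * A ^ 3 + 27 * B ^ 2) := by
      simp [W, WeierstrassCurve.Δ, WeierstrassCurve.b₂, WeierstrassCurve.b₄,
        WeierstrassCurve.b₆, WeierstrassCurve.b₈]; ring
    rw [this] at h
    have := (mul_eq_zero.mp h).resolve_left (pow_ne_zero _ h2')
    linear_combination -this
  have : W.IsElliptic := ⟨isUnit_iff_ne_zero.mpr hW⟩
  have hcard := card_points h2 W hW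
  have hs : ∀ x : F, 4 * x ^ 3 + W.b₂ * x ^ 2 + 2 * W.b₄ * x + W.b₆
      = 2 ^ 2 * (x ^ 3 + A * x + B) := by
    intro x
    simp [W, WeierstrassCurve.b₂, WeierstrassCurve.b₄, WeierstrassCurve.b₆]; ring
  simp_rw [hs, map_mul, quadraticChar_sq_one' h2', one_mul] at hcard
  rw [← hcard]
  -- the 3-division polynomial is `12 x f - f' ^ 2`
  have h3 : (3 * x ^ 2 + A) ^ 2 = 12 * x * y ^ 2 := by rw [hy]; grind
  have hy0 : y ≠ 0 := by
    rintro rfl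
    apply hΔ
    have h4 : 3 * x ^ 2 + A = 0 := by
      have : (3 * x ^ 2 + A) ^ 2 = 0 := by rw [h3]; ring
      exact pow_eq_zero_iff (two_ne_zero) |>.mp this
    have hf : x ^ 3 + A * x + B = 0 := by rw [← hy]; ring
    clear hx hy h3 hΔ hs hcard
    have hA : A = -3 * x ^ 2 := by linear_combination h4
    have hB : B = 2 * x ^ 3 := by rw [hA] at hf; linear_combination hf
    rw [hA, hB]; ring
  have hns : W.toAffine.Nonsingular x y := by
    rw [← WeierstrassCurve.Affine.equation_iff_nonsingular,
      WeierstrassCurve.Affine.equation_iff]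
    simp [W, hy]
  let P : W.toAffine.Point := .some x y hns
  have hneg : W.toAffine.negY x y = -y := by
    simp [W, WeierstrassCurve.Affine.negY]
  have hne : y ≠ W.toAffine.negY x y := by
    rw [hneg]; intro h
    apply hy0
    have : 2 * y = 0 := by linear_combination h
    exact (mul_eq_zero.mp this).resolve_left h2'
  have hsl : W.toAffine.slope x x y y = (3 * x ^ 2 + A) / (2 * y) := by
    rw [WeierstrassCurve.Affine.slope_of_Y_ne rfl hne, hneg]
    simp [W]
    congr 1; ring
  have hsl2 : (W.toAffine.slope x x y y) ^ 2 = 3 * x := by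
    rw [hsl, div_pow, h3]; field_simp; ring
  have hX : W.toAffine.addX x x (W.toAffine.slope x x y y) = x := by
    simp only [WeierstrassCurve.Affine.addX]
    have a1 : W.toAffine.a₁ = 0 := rfl
    have a2 : W.toAffine.a₂ = 0 := rfl
    rw [hsl2, a1, a2]; ring
  have hdbl : P + P = -P := by
    rw [WeierstrassCurve.Affine.Point.add_self_of_Y_ne hne,
      WeierstrassCurve.Affine.Point.neg_some]
    congr 1
    have a1 : W.toAffine.a₁ = 0 := rfl
    have a3 : W.toAffine.a₃ = 0 := rfl
    simp only [WeierstrassCurve.Affine.addY, WeierstrassCurve.Affine.negAddY, hX,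
      WeierstrassCurve.Affine.negY, a1, a3]
    ring
  have h3P : (3 : ℕ) • P = 0 := by
    rw [show (3 : ℕ) = 1 + 1 + 1 from rfl, add_smul, add_smul, one_smul, hdbl]
    exact neg_add_cancel P
  have hP0 : P ≠ 0 := WeierstrassCurve.Affine.Point.some_ne_zero hns
  have : Fact (Nat.Prime 3) := ⟨by norm_num⟩
  have ho := addOrderOf_eq_prime h3P hP0
  have := addOrderOf_dvd_natCard P
  rw [ho] at this
  exact_mod_cast this

/-- If 3 divides the trace of `y² = x³ + Ax + B` then neither twist has a point of order 3, so the
discriminant is a cube, and one of the three quadratic resolvent values `z + A` is a square. -/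
lemma exists_resolvent [DecidableEq F] [CharP F 7] (n : ℕ) (hn : Odd n)
    (hF : Fintype.card F = 7 ^ n) (A B : F)
    (hΔ : 4 * A ^ 3 + 27 * B ^ 2 ≠ 0) (hB : B ≠ 0)
    (ha : (3 : ℤ) ∣ ∑ x : F, quadraticChar F (x ^ 3 + A * x + B)) :
    ∃ α : F, (α ^ 2) ^ 3 + 4 * A * (α ^ 2) ^ 2 + 3 * A ^ 2 * α ^ 2 + 5 * B ^ 2 = 0 := by
  have h2 : ringChar F ≠ 2 := by rw [ringChar.eq F 7]; norm_num
  have hq3 : (Fintype.card F : ℤ) % 3 = 1 := by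
    rw [hF]
    have : (7 ^ n) % 3 = 1 := by rw [Nat.pow_mod]; norm_num
    exact_mod_cast this
  have hq4 : Fintype.card F % 4 = 3 := by
    obtain ⟨k, rfl⟩ := hn
    rw [hF, pow_add, pow_mul, Nat.mul_mod, Nat.pow_mod]; norm_num
  have hneg : quadraticChar F (-1) = -1 := by
    rw [quadraticChar_neg_one_iff_not_isSquare, FiniteField.isSquare_neg_one_iff]
    simp [hq4]
  have hcube : ∃ z : F, z ^ 3 = -(A ^ 3 + 5 * B ^ 2) := by
    by_contra hz
    obtain ⟨x, hx⟩ := exists_root_of_not_cube A B hB hz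
    by_cases hs : IsSquare (x ^ 3 + A * x + B)
    · obtain ⟨y, hy⟩ := hs
      have := three_dvd_of_root A B x y hΔ (by rw [hy]; ring) hx
      omega
    · -- `-1` is not a square, so `-x` is the abscissa of a rational point on the quadratic twist
      have hs' : IsSquare (-(x ^ 3 + A * x + B)) := by
        have h0 : -(x ^ 3 + A * x + B) ≠ 0 := by
          intro h; apply hs; rw [neg_eq_zero.mp h]; exact IsSquare.zero
        rw [← quadraticChar_one_iff_isSquare h0, ← neg_one_mul, map_mul, hneg,
          quadraticChar_neg_one_iff_not_isSquare.mpr hs]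
        norm_num
      obtain ⟨y, hy⟩ := hs'
      have := three_dvd_of_root A (-B) (-x) y (by rwa [neg_sq])
        (by rw [pow_two, ← hy]; ring) (by rw [← hx]; ring)
      have e : ∑ x : F, quadraticChar F (x ^ 3 + A * x + -B)
          = -∑ x : F, quadraticChar F (x ^ 3 + A * x + B) := by
        rw [← Equiv.sum_comp (Equiv.neg F), ← Finset.sum_neg_distrib]
        refine Finset.sum_congr rfl fun x _ => ?_
        have h1 : (-x) ^ 3 + A * (-x) + -B = -1 * (x ^ 3 + A * x + B) := by ring
        rw [Equiv.neg_apply, h1, map_mul, hneg, neg_one_mul]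
      rw [e] at this
      omega
  obtain ⟨z, hz⟩ := hcube
  have hy : ∀ y : F, (y - A) ^ 3 = -(A ^ 3 + 5 * B ^ 2) →
      y ^ 3 + 4 * A * y ^ 2 + 3 * A ^ 2 * y + 5 * B ^ 2 = 0 := by
    intro y h; grind
  -- the product of the three values is `2 * B ^ 2 = (3 * B) ^ 2`, so they are not all nonsquares
  have hprod : (z + A) * ((2 * z + A) * (4 * z + A)) = (3 * B) ^ 2 := by grind
  have h3B : 3 * B ≠ 0 := by
    intro h; apply hB; grind
  have hc := congrArg (quadraticChar F) hprod
  rw [map_mul, map_mul, quadraticChar_sq_one' h3B] at hc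
  have hex : IsSquare (z + A) ∨ IsSquare (2 * z + A) ∨ IsSquare (4 * z + A) := by
    by_contra! h
    rw [quadraticChar_neg_one_iff_not_isSquare.mpr h.1,
      quadraticChar_neg_one_iff_not_isSquare.mpr h.2.1,
      quadraticChar_neg_one_iff_not_isSquare.mpr h.2.2] at hc
    norm_num at hc
  rcases hex with ⟨α, h⟩ | ⟨α, h⟩ | ⟨α, h⟩ <;> refine ⟨α, hy _ ?_⟩ <;> rw [pow_two, ← h]
  · linear_combination hz
  · grind
  · grind

end ThreeTorsion


/-! ### The Hasse invariant in characteristic 7 -/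

section Hasse

/-- The coefficient of `X ^ (q - 1)` in `(X³ + A X + B) ^ ((q - 1) / 2)` for `q = 7 ^ n`, with
`q - 1 = 6 e`. Passing from `n` to `n + 1` replaces `G` by `f³ G⁷`, and only the coefficient `3B`
of `X⁶` in `f³` is in the residue class that contributes. -/
lemma coeff_hasse {R : Type*} [CommRing R] [CharP R 7] (A B : R) (n : ℕ) :
    ∀ e : ℕ, 6 * e + 1 = 7 ^ n →
      ((Polynomial.X ^ 3 + Polynomial.C A * Polynomial.X + Polynomial.C B : Polynomial R)
        ^ (3 * e)).coeff (6 * e) = (3 * B) ^ e := by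
  have : Fact (Nat.Prime 7) := ⟨by norm_num⟩
  induction n with
  | zero =>
    intro e he
    have : e = 0 := by simpa using he
    subst this; simp
  | succ n ih =>
    intro e' he'
    obtain ⟨e, rfl⟩ : ∃ e, e' = 7 * e + 1 := by
      have h1 : 7 ^ n % 6 = 1 := by
        rw [Nat.pow_mod]; norm_num
      refine ⟨7 ^ n / 6, ?_⟩
      rw [pow_succ] at he'
      omega
    have he : 6 * e + 1 = 7 ^ n := by rw [pow_succ] at he'; omega
    specialize ih e he
    set f : Polynomial R := Polynomial.X ^ 3 + Polynomial.C A * Polynomial.X + Polynomial.C B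
      with hf
    have hG := Polynomial.map_frobenius_expand 7 (f ^ (3 * e))
    have hco : ∀ j, ((f ^ (3 * e)) ^ 7).coeff j
        = if 7 ∣ j then ((f ^ (3 * e)).coeff (j / 7)) ^ 7 else 0 := by
      intro j
      rw [← hG, Polynomial.coeff_map, Polynomial.coeff_expand (by norm_num)]
      split_ifs <;> simp [frobenius_def]
    have hsplit : f ^ (3 * (7 * e + 1)) = (f ^ (3 * e)) ^ 7 * f ^ 3 := by
      rw [← pow_mul, ← pow_add]; congr 1; ring
    have hf3 : f ^ 3 = Polynomial.C 1 * Polynomial.X ^ 9 + Polynomial.C (3 * A) * Polynomial.X ^ 7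
        + Polynomial.C (3 * B) * Polynomial.X ^ 6 + Polynomial.C (3 * A ^ 2) * Polynomial.X ^ 5
        + Polynomial.C (6 * A * B) * Polynomial.X ^ 4
        + Polynomial.C (A ^ 3 + 3 * B ^ 2) * Polynomial.X ^ 3
        + Polynomial.C (3 * A ^ 2 * B) * Polynomial.X ^ 2
        + Polynomial.C (3 * A * B ^ 2) * Polynomial.X ^ 1
        + Polynomial.C (B ^ 3) * Polynomial.X ^ 0 := by
      rw [hf]
      simp only [map_mul, map_add, map_pow, map_one, map_ofNat]
      ring
    have hi : 6 * (7 * e + 1) = 42 * e + 6 := by ring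
    rw [hsplit, hf3, hi]
    simp only [mul_add, Polynomial.coeff_add, ← mul_assoc, Polynomial.coeff_mul_X_pow',
      Polynomial.coeff_mul_C, hco]
    have n9 : ¬ (9 ≤ 42 * e + 6 ∧ 7 ∣ 42 * e + 6 - 9) := by omega
    have n7 : ¬ (7 ≤ 42 * e + 6 ∧ 7 ∣ 42 * e + 6 - 7) := by omega
    have n6 : 7 ∣ 42 * e + 6 - 6 := by omega
    have n5 : ¬ 7 ∣ 42 * e + 6 - 5 := by omega
    have n4 : ¬ 7 ∣ 42 * e + 6 - 4 := by omega
    have n3 : ¬ 7 ∣ 42 * e + 6 - 3 := by omega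
    have n2 : ¬ 7 ∣ 42 * e + 6 - 2 := by omega
    have n1 : ¬ 7 ∣ 42 * e + 6 - 1 := by omega
    have n0 : ¬ 7 ∣ 42 * e + 6 - 0 := by omega
    have d : (42 * e + 6 - 6) / 7 = 6 * e := by omega
    have l6 : 6 ≤ 42 * e + 6 := by omega
    simp only [n6, n5, n4, n3, n2, n1, n0, d, l6, if_true, if_false, zero_mul, ite_self, add_zero,
      ih]
    rw [ite_eq_right_iff.mpr, ite_eq_right_iff.mpr]
    · ring
    · intro h; rw [if_neg (fun h' => n7 ⟨h, h'⟩), zero_mul, zero_mul]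
    · intro h; rw [if_neg (fun h' => n9 ⟨h, h'⟩), zero_mul]

variable {F : Type*} [Field F] [Fintype F]

/-- A power sum `∑ x ^ i` with `i < 2 (q - 1)` vanishes unless `i = q - 1`, when it is `-1`. -/
lemma sum_eval_of_natDegree_lt (P : Polynomial F)
    (hP : P.natDegree < 2 * (Fintype.card F - 1)) :
    ∑ x : F, P.eval x = -P.coeff (Fintype.card F - 1) := by
  classical
  have hq : 1 < Fintype.card F := Fintype.one_lt_card
  simp_rw [Polynomial.eval_eq_sum_range' hP]
  rw [Finset.sum_comm]
  simp_rw [← Finset.mul_sum]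
  rw [Finset.sum_eq_single (Fintype.card F - 1)]
  · have h1 : ∑ x : F, x ^ (Fintype.card F - 1) = ∑ x : F, ((1 : F) - if x = 0 then 1 else 0) := by
      refine Finset.sum_congr rfl fun x _ => ?_
      split_ifs with h
      · rw [h, zero_pow (by omega)]; ring
      · rw [FiniteField.pow_card_sub_one_eq_one x h]; ring
    rw [h1, Finset.sum_sub_distrib]
    simp
  · intro i hi hne
    rw [Finset.mem_range] at hi
    rcases lt_or_gt_of_ne hne with h | h
    · rw [FiniteField.sum_pow_lt_card_sub_one F i h, mul_zero]
    · have : ∀ x : F, x ^ i = x ^ (i - (Fintype.card F - 1)) := by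
        intro x
        have e : i = (i - Fintype.card F) + Fintype.card F := by omega
        have e' : i - (Fintype.card F - 1) = (i - Fintype.card F) + 1 := by omega
        rw [e', pow_succ]
        conv_lhs => rw [e, pow_add, FiniteField.pow_card]
      simp_rw [this]
      rw [FiniteField.sum_pow_lt_card_sub_one F _ (by omega), mul_zero]
  · intro h
    exact absurd (Finset.mem_range.mpr (by omega)) h

/-- The trace of `y² = x³ + Ax + B` modulo 7 is the norm of its Hasse invariant `3B`. -/
lemma trace_mod_seven [DecidableEq F] [CharP F 7] (n e : ℕ) (hn : 0 < n)
    (hF : Fintype.card F = 7 ^ n) (he : 6 * e + 1 = 7 ^ n) (A B : F) :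
    ((∑ x : F, quadraticChar F (x ^ 3 + A * x + B) : ℤ) : F) = -(3 * B) ^ e := by
  have h2 : ringChar F ≠ 2 := by rw [ringChar.eq F 7]; norm_num
  have h7 : 7 ≤ 7 ^ n := Nat.le_self_pow hn.ne' 7
  push_cast
  simp_rw [quadraticChar_eq_pow_of_char_ne_two' h2]
  have hh : Fintype.card F / 2 = 3 * e := by omega
  have hc : Fintype.card F - 1 = 6 * e := by omega
  rw [hh, ← coeff_hasse A B n e he, ← hc, ← sum_eval_of_natDegree_lt]
  · simp
  · have : (Polynomial.X ^ 3 + Polynomial.C A * Polynomial.X + Polynomial.C B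
        : Polynomial F).natDegree ≤ 3 := by compute_degree
    calc _ ≤ 3 * e * 3 := (Polynomial.natDegree_pow_le_of_le _ this)
      _ < _ := by omega

/-- If the trace is a nonzero square modulo 7, so is the Hasse invariant `3B` in `F`. -/
lemma neg_B_isSquare [DecidableEq F] [CharP F 7] (n : ℕ) (hn : 0 < n)
    (hF : Fintype.card F = 7 ^ n) (A B : F) (a : ℤ)
    (ha : a = -∑ x : F, quadraticChar F (x ^ 3 + A * x + B))
    (ham : a % 7 = 1 ∨ a % 7 = 2 ∨ a % 7 = 4) : ∃ b : F, b ≠ 0 ∧ B = -b ^ 2 := by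
  have h2 : ringChar F ≠ 2 := by rw [ringChar.eq F 7]; norm_num
  have h7 : 7 ≤ 7 ^ n := Nat.le_self_pow hn.ne' 7
  have h1 : 7 ^ n % 6 = 1 := by rw [Nat.pow_mod]; norm_num
  obtain ⟨e, he⟩ : ∃ e, 6 * e + 1 = 7 ^ n := ⟨7 ^ n / 6, by omega⟩
  have ht := trace_mod_seven n e hn hF he A B
  have ha' : (a : F) = (3 * B) ^ e := by
    rw [ha]; push_cast; push_cast at ht; rw [ht]; ring
  have ha3 : (a : F) ^ 3 = 1 := by
    have : ((a ^ 3 - 1 : ℤ) : F) = 0 := by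
      rw [CharP.intCast_eq_zero_iff F 7]
      have : (a ^ 3 - 1) % 7 = 0 := by
        rcases ham with h | h | h <;> simp [Int.sub_emod, pow_succ, Int.mul_emod, h]
      omega
    push_cast at this
    linear_combination this
  have h3B : (3 * B) ^ (Fintype.card F / 2) = 1 := by
    rw [show Fintype.card F / 2 = e * 3 by omega, pow_mul, ← ha', ha3]
  have h3B0 : 3 * B ≠ 0 := by
    intro h
    rw [h, zero_pow (by omega)] at h3B
    exact zero_ne_one h3B
  obtain ⟨c, hc⟩ := (FiniteField.isSquare_iff h2 h3B0).mpr h3B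
  -- `3 = -4` in characteristic 7, and `4` is the inverse of `2`
  refine ⟨4 * c, ?_, ?_⟩
  · rintro h
    apply h3B0
    grind
  · grind

end Hasse


/-! ### Choice of the parameters -/

section Reduction

variable {F : Type*} [Field F] [Fintype F] [DecidableEq F]

/-- In characteristic 7, completing the cube puts the two-torsion cubic in short form. -/
lemma short_form [CharP F 7] (W : WeierstrassCurve F) (hW : W.Δ ≠ 0) :
    ∃ A B : F, 4 * A ^ 3 + 27 * B ^ 2 ≠ 0 ∧
      ∑ x : F, quadraticChar F (4 * x ^ 3 + W.b₂ * x ^ 2 + 2 * W.b₄ * x + W.b₆)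
        = ∑ x : F, quadraticChar F (x ^ 3 + A * x + B) := by
  have h2' : (2 : F) ≠ 0 := Ring.two_ne_zero (by rw [ringChar.eq F 7]; norm_num)
  refine ⟨W.b₂ ^ 2 + 4 * W.b₄, 5 * W.b₂ ^ 3 + 2 * W.b₂ * W.b₄ + 2 * W.b₆, ?_, ?_⟩
  · intro h
    apply hW
    have h8 := W.b_relation
    rw [WeierstrassCurve.Δ]
    generalize W.b₂ = b2 at *
    generalize W.b₄ = b4 at *
    generalize W.b₆ = b6 at *
    generalize W.b₈ = b8 at *
    clear hW h2'
    grind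
  · rw [← Equiv.sum_comp (Equiv.addRight (4 * W.b₂))]
    refine Finset.sum_congr rfl fun x _ => ?_
    rw [Equiv.coe_addRight]
    have : 4 * (x + 4 * W.b₂) ^ 3 + W.b₂ * (x + 4 * W.b₂) ^ 2 + 2 * W.b₄ * (x + 4 * W.b₂) + W.b₆
        = 2 ^ 2 * (x ^ 3 + (W.b₂ ^ 2 + 4 * W.b₄) * x
          + (5 * W.b₂ ^ 3 + 2 * W.b₂ * W.b₄ + 2 * W.b₆)) := by
      generalize W.b₂ = b2
      generalize W.b₄ = b4
      generalize W.b₆ = b6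
      clear h2' hW
      grind
    rw [this, map_mul, quadraticChar_sq_one' h2', one_mul]

/-- The change of variables `x ↦ u² x` does not change the trace. -/
lemma sum_scale (A B u : F) (hu : u ≠ 0) :
    ∑ x : F, quadraticChar F (x ^ 3 + A * u ^ 4 * x + B * u ^ 6)
      = ∑ x : F, quadraticChar F (x ^ 3 + A * x + B) := by
  rw [← Equiv.sum_comp (Equiv.mulRight₀ (u ^ 2) (pow_ne_zero 2 hu))]
  refine Finset.sum_congr rfl fun x _ => ?_
  rw [show Equiv.mulRight₀ (u ^ 2) (pow_ne_zero 2 hu) x = x * u ^ 2 from rfl]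
  have : (x * u ^ 2) ^ 3 + A * u ^ 4 * (x * u ^ 2) + B * u ^ 6
      = (u ^ 3) ^ 2 * (x ^ 3 + A * x + B) := by ring
  rw [this, map_mul, quadraticChar_sq_one' (pow_ne_zero 3 hu), one_mul]

/-- `sum_quartic` in characteristic 7, with the resolvent cubic in short form. -/
lemma sum_quartic_short [CharP F 7] (p r s : F)
    (h : 4 * (4 * p ^ 2 - s) ^ 3 + 27 * (5 * p ^ 3 - 5 * p * s + r ^ 2) ^ 2 ≠ 0) :
    ∑ t : F, quadraticChar F (t ^ 4 + p * t ^ 2 + r * t + s)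
      = -1 + ∑ x : F, quadraticChar F (x ^ 3 + (4 * p ^ 2 - s) * x
        + (5 * p ^ 3 - 5 * p * s + r ^ 2)) := by
  rw [sum_quartic (by rw [ringChar.eq F 7]; norm_num) p r s]
  · congr 1
    rw [← Equiv.sum_comp (Equiv.subLeft (-p))]
    refine Finset.sum_congr rfl fun x _ => ?_
    rw [Equiv.subLeft_apply]
    congr 1
    clear h
    grind
  · by_contra! hc
    obtain ⟨hr, hs⟩ := hc
    apply h
    clear h
    grind

/-- The choice of `a1`, `a2`. With `k = A / α²` and `M = α⁶ / b⁴`, the curve `y² = x³ + A x + B` is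
isomorphic to `y² = x³ + 2 k M x - M`, by the scaling `2 α / b`. The cubic in the conclusion is put
in this form by the choice of `a1`, `a2`, and then the resolvent cubic of the quartic is
`x³ + k (k - 1)⁴ M³ x - (k - 1)⁶ M⁴`, the rescaling of `x³ + A x + B` by `(k - 1) α⁴ / b³`.
The two inequalities are what `smooth_of_params` needs. -/
lemma exists_params [CharP F 7] (A B b α : F) (hb : b ≠ 0) (hB : B = -b ^ 2)
    (hΔ : 4 * A ^ 3 + 27 * B ^ 2 ≠ 0)
    (hα : (α ^ 2) ^ 3 + 4 * A * (α ^ 2) ^ 2 + 3 * A ^ 2 * α ^ 2 + 5 * B ^ 2 = 0) :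
    ∃ a1 a2 : F, 81 * a1 + 27 * a2 + 15 ≠ 0 ∧
      4 * (1 + 3 * a2) ^ 3 + 27 * (2 + 2 * a2 + a2 ^ 2 - 4 * a1) ^ 2 ≠ 0 ∧
      ∑ x : F, quadraticChar F (-x ^ 3 + 5 * x ^ 2 + 4 * a2 * x + a2 ^ 2 - 4 * a1)
        = ∑ x : F, quadraticChar F (x ^ 3 + A * x + B) ∧
      ∑ t : F, quadraticChar F (t ^ 4 + (2 * a2 + 4) * t ^ 3 +
          (5 + a2 ^ 2 + 2 * a1 + 6 * a2) * t ^ 2 + (a2 + 2 * a1 * a2 + 6 * a1) * t + (a1 + a1 ^ 2))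
        = -1 + ∑ x : F, quadraticChar F (x ^ 3 + A * x + B) := by
  have hα0 : α ≠ 0 := by
    rintro rfl
    have h5 : (5 : F) ≠ 0 := by
      intro h
      have : (1 : F) = 0 := by clear * - h; grind
      exact one_ne_zero this
    apply hb
    have : 5 * b ^ 4 = 0 := by rw [hB] at hα; linear_combination hα
    exact pow_eq_zero_iff (by norm_num) |>.mp ((mul_eq_zero.mp this).resolve_left h5)
  have h7 : (7 : F) = 0 := by exact_mod_cast CharP.cast_eq_zero F 7
  obtain ⟨k, rfl⟩ : ∃ k, A = k * α ^ 2 := ⟨A / α ^ 2, by field_simp⟩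
  have hm : b ^ 4 = α ^ 6 * (5 * k ^ 2 + 2 * k + 4) := by
    rw [hB] at hα
    linear_combination 3 * hα + (-α ^ 6 - 2 * k * α ^ 6 - 2 * k ^ 2 * α ^ 6 - 2 * b ^ 4) * h7
  have hm0 : 5 * k ^ 2 + 2 * k + 4 ≠ 0 := by
    intro h0; rw [h0, mul_zero] at hm; exact pow_ne_zero 4 hb hm
  have hk1 : k ≠ 1 := by
    rintro rfl
    apply hΔ
    rw [hB]
    linear_combination 27 * hm + 43 * α ^ 6 * h7
  obtain ⟨M, hM⟩ : ∃ M : F, M * (5 * k ^ 2 + 2 * k + 4) = 1 := ⟨_, inv_mul_cancel₀ hm0⟩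
  have hMb : M = α ^ 6 / b ^ 4 := by
    field_simp; rw [hm]; linear_combination α ^ 6 * hM
  have hMD : M = 1 / (5 * k ^ 2 + 2 * k + 4) := eq_div_of_mul_eq hm0 hM
  have hM0 : M ≠ 0 := by rintro rfl; simp at hM
  have hk1' : k - 1 ≠ 0 := sub_ne_zero.mpr hk1
  obtain ⟨a2, ha2⟩ : ∃ a2 : F, a2 = 5 * (2 * k * M) + 2 := ⟨_, rfl⟩
  obtain ⟨a1, ha1⟩ : ∃ a1 : F, a1 = (2 * k * M) ^ 2 + 4 * (2 * k * M) + 6 + 2 * M := ⟨_, rfl⟩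
  have hA' : 1 + 3 * a2 = 2 * k * M := by rw [ha2]; clear * - h7; grind
  have hB' : 2 + 2 * a2 + a2 ^ 2 - 4 * a1 = -M := by rw [ha1, ha2]; clear * - h7; grind
  have hu : (2 : F) * α / b ≠ 0 := by
    refine div_ne_zero (mul_ne_zero ?_ hα0) hb
    exact Ring.two_ne_zero (by rw [ringChar.eq F 7]; norm_num)
  have hρ : (k - 1) * α ^ 4 / b ^ 3 ≠ 0 := by
    exact div_ne_zero (mul_ne_zero hk1' (pow_ne_zero _ hα0)) (pow_ne_zero _ hb)
  have hAu : k * α ^ 2 * (2 * α / b) ^ 4 = 2 * k * M := by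
    rw [hMb]; field_simp; linear_combination 2 * k * h7
  have hBu : B * (2 * α / b) ^ 6 = -M := by
    rw [hB, hMb]; field_simp; linear_combination -9 * h7
  have hAρ : k * α ^ 2 * ((k - 1) * α ^ 4 / b ^ 3) ^ 4 = k * (k - 1) ^ 4 * M ^ 3 := by
    rw [hMb]; field_simp
  have hBρ : B * ((k - 1) * α ^ 4 / b ^ 3) ^ 6 = -(k - 1) ^ 6 * M ^ 4 := by
    rw [hB, hMb]; field_simp
  have hΔu : ∀ u : F, u ≠ 0 → 4 * (k * α ^ 2 * u ^ 4) ^ 3 + 27 * (B * u ^ 6) ^ 2 ≠ 0 := by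
    intro u hu h
    have : u ^ 12 * (4 * (k * α ^ 2) ^ 3 + 27 * B ^ 2) = 0 := by linear_combination h
    exact hΔ ((mul_eq_zero.mp this).resolve_left (pow_ne_zero _ hu))
  refine ⟨a1, a2, ?_, ?_, ?_, ?_⟩
  · intro h
    have : (k - 1) ^ 4 * M ^ 2 = 0 := by
      rw [ha1, ha2] at h
      rw [hMD] at h ⊢
      clear * - h h7 hm0
      generalize hD : 5 * k ^ 2 + 2 * k + 4 = D at *
      field_simp at h ⊢
      grind
    exact mul_ne_zero (pow_ne_zero 4 hk1') (pow_ne_zero 2 hM0) this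
  · rw [hA', hB', ← hAu, ← hBu]; exact hΔu _ hu
  · rw [← sum_scale (k * α ^ 2) B _ hu, hAu, hBu, ← hA', ← hB',
      ← Equiv.sum_comp (Equiv.subLeft (-3 : F))]
    refine Finset.sum_congr rfl fun x _ => ?_
    rw [Equiv.subLeft_apply]
    congr 1
    clear * - h7
    grind
  · -- coefficients of the quartic after the cubic term is removed by `t ↦ t + 2 k M - 2`
    obtain ⟨p, hp⟩ : ∃ p : F, p = 5 * (2 * k * M) - 3 * M + 2 := ⟨_, rfl⟩
    obtain ⟨r, hr⟩ : ∃ r : F, r = (2 * k * M) ^ 2 + 4 * (2 * k * M) - 3 * M + 1 := ⟨_, rfl⟩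
    obtain ⟨s, hs⟩ : ∃ s : F, s = 5 * (2 * k * M) ^ 3 + 4 * (2 * k * M) ^ 2
      - 6 * (2 * k * M) * M + 2 * (2 * k * M) + 4 * M ^ 2 - 5 * M + 2 := ⟨_, rfl⟩
    have e1 : 4 * p ^ 2 - s = k * (k - 1) ^ 4 * M ^ 3 := by
      rw [hp, hs]
      rw [hMD]
      clear * - h7 hm0
      generalize hD : 5 * k ^ 2 + 2 * k + 4 = D at *
      field_simp
      grind
    have e2 : 5 * p ^ 3 - 5 * p * s + r ^ 2 = -(k - 1) ^ 6 * M ^ 4 := by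
      rw [hp, hs, hr]
      rw [hMD]
      clear * - h7 hm0
      generalize hD : 5 * k ^ 2 + 2 * k + 4 = D at *
      field_simp
      grind
    rw [← sum_scale (k * α ^ 2) B _ hρ, hAρ, hBρ, ← e1, ← e2, ← sum_quartic_short,
      ← Equiv.sum_comp (Equiv.addRight (2 * k * M - 2))]
    · refine Finset.sum_congr rfl fun t _ => ?_
      rw [Equiv.coe_addRight]
      congr 1
      rw [hp, hr, hs, ha1, ha2]
      clear * - h7
      grind
    · rw [e1, e2, ← hAρ, ← hBρ]; exact hΔu _ hρ

end Reduction


/-! ### Counting points on the quartic -/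

section Cubic

variable {F : Type*} [Field F] [Fintype F]

/-- Stickelberger: an irreducible cubic over a finite field has square discriminant. The roots form
one Frobenius orbit `r, s, u`, so `(r - s) (s - u) (u - r)` is fixed by Frobenius. -/
lemma disc_square_of_no_root_aux (K : Type*) [Field K] [Algebra F K] [IsAlgClosed K] (b c d : F)
    (h : ∀ x : F, x ^ 3 + b * x ^ 2 + c * x + d ≠ 0) :
    ∃ e : F, e ≠ 0 ∧
      b ^ 2 * c ^ 2 - 4 * c ^ 3 - 4 * b ^ 3 * d - 27 * d ^ 2 + 18 * b * c * d = e ^ 2 := by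
  obtain ⟨φ, hφ⟩ : ∃ φ : K →ₐ[F] K, ∀ x, φ x = x → ∃ y : F, algebraMap F K y = x :=
    ⟨FiniteField.frobeniusAlgHom F K, fun x hx => exists_of_pow_card_eq x hx⟩
  have inj : Function.Injective (algebraMap F K) := (algebraMap F K).injective
  have hφi : Function.Injective φ := φ.toRingHom.injective
  obtain ⟨b', hb⟩ : ∃ b' : K, b' = algebraMap F K b := ⟨_, rfl⟩
  obtain ⟨c', hc⟩ : ∃ c' : K, c' = algebraMap F K c := ⟨_, rfl⟩
  obtain ⟨d', hd⟩ : ∃ d' : K, d' = algebraMap F K d := ⟨_, rfl⟩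
  have hφb : φ b' = b' := by rw [hb, AlgHom.commutes]
  have hφc : φ c' = c' := by rw [hc, AlgHom.commutes]
  have hφd : φ d' = d' := by rw [hd, AlgHom.commutes]
  have nofix : ∀ x : K, x ^ 3 + b' * x ^ 2 + c' * x + d' = 0 → φ x ≠ x := by
    intro x hx hf
    obtain ⟨y, rfl⟩ := hφ x hf
    exact h y (inj (by simpa only [map_add, map_mul, map_pow, map_zero, hb, hc, hd] using hx))
  have stable : ∀ x : K, x ^ 3 + b' * x ^ 2 + c' * x + d' = 0 →
      φ x ^ 3 + b' * φ x ^ 2 + c' * φ x + d' = 0 := by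
    intro x hx
    have := congrArg φ hx
    simpa only [map_add, map_mul, map_pow, map_zero, hφb, hφc, hφd] using this
  obtain ⟨r, hr⟩ : ∃ r : K, r ^ 3 + b' * r ^ 2 + c' * r + d' = 0 := by
    have hdeg : (Polynomial.X ^ 3 + Polynomial.C b' * Polynomial.X ^ 2 + Polynomial.C c'
        * Polynomial.X + Polynomial.C d' : Polynomial K).degree = 3 := by compute_degree!
    obtain ⟨r, hr⟩ := IsAlgClosed.exists_root _ (by rw [hdeg]; decide :
      (Polynomial.X ^ 3 + Polynomial.C b' * Polynomial.X ^ 2 + Polynomial.C c'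
        * Polynomial.X + Polynomial.C d' : Polynomial K).degree ≠ 0)
    exact ⟨r, by simpa [Polynomial.IsRoot.def] using hr⟩
  have hs := stable r hr
  have hu := stable _ hs
  have hv := stable _ hu
  have hrs : φ r - r ≠ 0 := sub_ne_zero.mpr (nofix r hr)
  generalize hs' : φ r = s at *
  have hsu : φ s - s ≠ 0 := sub_ne_zero.mpr (nofix s hs)
  generalize hu' : φ s = u at *
  have q1 : s ^ 2 + s * r + r ^ 2 + b' * (s + r) + c' = 0 :=
    (mul_eq_zero.mp (by linear_combination hs - hr :
      (s - r) * (s ^ 2 + s * r + r ^ 2 + b' * (s + r) + c') = 0)).resolve_left hrs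
  have hru : u - r ≠ 0 := by
    intro h0
    have hur : u = r := sub_eq_zero.mp h0
    -- otherwise Frobenius swaps two roots and fixes the third
    refine nofix (-b' - r - s) ?_ ?_
    · linear_combination hr - (b' + 2 * r + s) * q1
    · rw [map_sub, map_sub, map_neg, hφb, hs', hu', hur]; ring
  have q2 : u ^ 2 + u * r + r ^ 2 + b' * (u + r) + c' = 0 :=
    (mul_eq_zero.mp (by linear_combination hu - hr :
      (u - r) * (u ^ 2 + u * r + r ^ 2 + b' * (u + r) + c') = 0)).resolve_left hru
  have v1 : b' = -(r + s + u) := by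
    have := (mul_eq_zero.mp (by linear_combination q2 - q1 :
      (u - s) * (r + s + u + b') = 0)).resolve_left hsu
    linear_combination this
  have hφu : φ u = r := by
    have h1 : φ u - u ≠ 0 := sub_ne_zero.mpr (nofix u hu)
    have h2 : φ u - s ≠ 0 := by
      intro h0
      apply hru
      rw [sub_eq_zero] at h0 ⊢
      exact hφi (by rw [h0, hs'])
    have h3 : (φ u - u) * ((φ u - s) * (φ u - r)) = 0 := by
      rw [v1] at hv q1 hr
      linear_combination hv - hr - (φ u - r) * q1
    exact sub_eq_zero.mp ((mul_eq_zero.mp ((mul_eq_zero.mp h3).resolve_left h1)).resolve_left h2)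
  obtain ⟨e, he⟩ := hφ ((r - s) * (s - u) * (u - r)) (by
    simp only [map_mul, map_sub, hs', hu', hφu]; ring)
  refine ⟨e, ?_, inj ?_⟩
  · rintro rfl
    rw [map_zero] at he
    refine mul_ne_zero (mul_ne_zero ?_ ?_) hru he.symm
    · intro h0; apply hrs; linear_combination -h0
    · intro h0; apply hsu; linear_combination -h0
  · have v2 : c' = r * s + s * u + u * r := by rw [v1] at q1; linear_combination q1
    have v3 : d' = -(r * s * u) := by rw [v1, v2] at hr; linear_combination hr
    simp only [map_add, map_sub, map_mul, map_pow, map_ofNat, he, ← hb, ← hc, ← hd]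
    rw [v1, v2, v3]; ring

variable [DecidableEq F]

/-- Summing the character of the discriminant of the cofactor over the roots of a cubic. -/
lemma sum_roots_cubic (h2 : ringChar F ≠ 2) (b c d : F) :
    ∑ x ∈ Finset.univ.filter (fun x : F => x ^ 3 + b * x ^ 2 + c * x + d = 0),
      quadraticChar F ((b + x) ^ 2 - 4 * (c + b * x + x ^ 2))
    = quadraticChar F (b ^ 2 * c ^ 2 - 4 * c ^ 3 - 4 * b ^ 3 * d - 27 * d ^ 2 + 18 * b * c * d)
      + (Finset.univ.filter fun x : F => x ^ 3 + b * x ^ 2 + c * x + d = 0).card - 1 := by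
  by_cases hroot : ∃ x : F, x ^ 3 + b * x ^ 2 + c * x + d = 0
  swap
  · push Not at hroot
    obtain ⟨e, he, hD⟩ := disc_square_of_no_root_aux (AlgebraicClosure F) b c d hroot
    rw [hD, quadraticChar_sq_one' he, Finset.filter_false_of_mem (fun x _ => hroot x)]
    simp
  obtain ⟨x, hx⟩ := hroot
  have hd : d = -(x ^ 3 + b * x ^ 2 + c * x) := by linear_combination hx
  have hfac : ∀ w, w ^ 3 + b * w ^ 2 + c * w + d = 0 ↔
      w = x ∨ 1 * w ^ 2 + (b + x) * w + (c + b * x + x ^ 2) = 0 := by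
    intro w
    rw [← sub_eq_zero (a := w) (b := x), ← mul_eq_zero, hd]
    constructor <;> intro h <;> linear_combination h
  have hdisc : b ^ 2 * c ^ 2 - 4 * c ^ 3 - 4 * b ^ 3 * d - 27 * d ^ 2 + 18 * b * c * d
      = ((b + x) ^ 2 - 4 * (c + b * x + x ^ 2)) * (3 * x ^ 2 + 2 * b * x + c) ^ 2 := by
    rw [hd]; ring
  have hcq := card_quadratic h2 1 (b + x) (c + b * x + x ^ 2) one_ne_zero
  by_cases hy : ∃ y : F, 1 * y ^ 2 + (b + x) * y + (c + b * x + x ^ 2) = 0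
  · obtain ⟨y, hy⟩ := hy
    obtain ⟨z, hz⟩ : ∃ z : F, z = -b - x - y := ⟨_, rfl⟩
    have v1 : b = -(x + y + z) := by rw [hz]; ring
    have v2 : c = x * y + y * z + z * x := by rw [v1] at hy; linear_combination hy
    have v3 : d = -(x * y * z) := by rw [hd, v1, v2]; ring
    have hset : (Finset.univ.filter fun w : F => w ^ 3 + b * w ^ 2 + c * w + d = 0)
        = {x, y, z} := by
      ext w
      simp only [Finset.mem_filter, Finset.mem_univ, true_and, Finset.mem_insert,
        Finset.mem_singleton]
      rw [← sub_eq_zero (a := w) (b := x), ← sub_eq_zero (a := w) (b := y),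
        ← sub_eq_zero (a := w) (b := z), ← mul_eq_zero, ← mul_eq_zero, v1, v2, v3]
      constructor <;> intro h <;> linear_combination h
    rw [hset, show b ^ 2 * c ^ 2 - 4 * c ^ 3 - 4 * b ^ 3 * d - 27 * d ^ 2 + 18 * b * c * d
      = ((x - y) * (y - z) * (z - x)) ^ 2 by rw [v1, v2, v3]; ring]
    have hδ : ∀ p q r : F, p + q + r = -b → p * q + q * r + r * p = c →
        (b + p) ^ 2 - 4 * (c + b * p + p ^ 2) = (q - r) ^ 2 := by
      intro p q r h1 h2
      rw [← h2, show b = -(p + q + r) by rw [h1]; ring]; ring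
    have h1 := hδ x y z (by rw [v1]; ring) (by rw [v2])
    have h2 := hδ y z x (by rw [v1]; ring) (by rw [v2]; ring)
    have h3 := hδ z x y (by rw [v1]; ring) (by rw [v2]; ring)
    have hsq : ∀ w : F, quadraticChar F (w ^ 2) = if w = 0 then 0 else 1 := by
      intro w
      split_ifs with hw
      · simp [hw]
      · exact quadraticChar_sq_one' hw
    have hxy : x - y = 0 ↔ x = y := sub_eq_zero
    have hyz : y - z = 0 ↔ y = z := sub_eq_zero
    have hzx : z - x = 0 ↔ z = x := sub_eq_zero
    by_cases e1 : x = y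
    · by_cases e2 : y = z
      · subst e1 e2; simp [h1]
      · subst e1
        rw [Finset.insert_eq_of_mem (Finset.mem_insert_self _ _), Finset.sum_pair e2,
          Finset.card_pair e2, h1, h3, hsq, hsq, hsq]
        simp [sub_eq_zero, e2]
    · by_cases e2 : y = z
      · subst e2
        rw [Finset.pair_eq_singleton, Finset.sum_pair e1,
          Finset.card_pair e1, h1, h2, hsq, hsq, hsq]
        simp [sub_eq_zero, Ne.symm e1]
      · by_cases e3 : z = x
        · subst e3
          rw [Finset.pair_comm, Finset.insert_eq_of_mem (Finset.mem_insert_self _ _),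
            Finset.sum_pair (Ne.symm e2), Finset.card_pair (Ne.symm e2), h1, h2, hsq, hsq, hsq]
          simp [sub_eq_zero, e2]
        · rw [Finset.sum_insert (by simp [e1, Ne.symm e3]), Finset.sum_pair e2,
            Finset.card_insert_of_notMem (by simp [e1, Ne.symm e3]), Finset.card_pair e2,
            h1, h2, h3, hsq, hsq, hsq, hsq]
          simp [sub_eq_zero, e1, e2, e3]
  · push Not at hy
    rw [Finset.filter_false_of_mem (fun y _ => hy y), Finset.card_empty, mul_one] at hcq
    have hset : (Finset.univ.filter fun w : F => w ^ 3 + b * w ^ 2 + c * w + d = 0) = {x} := by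
      ext w
      simp only [Finset.mem_filter, Finset.mem_univ, true_and, Finset.mem_singleton, hfac w]
      simpa using fun h => absurd h (by simpa using hy w)
    have hne : 3 * x ^ 2 + 2 * b * x + c ≠ 0 := by
      intro h; apply hy x; linear_combination h
    rw [hset, hdisc, map_mul, quadraticChar_sq_one' hne, Finset.sum_singleton,
      Finset.card_singleton]
    simp

end Cubic

section Count

variable {F : Type*} [Field F] [Fintype F] [DecidableEq F]

/-- The points of the quartic with `T1 = 1`: first choose `t = T2` and one coordinate `x`, which is
a root of `X³ - X² + t X - T3`; the other two coordinates are the roots of the cofactor. -/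
lemma card_affine [CharP F 7] (a1 a2 : F) :
    ((Finset.univ.filter fun v : Fin 3 → F => v 0 + v 1 + v 2 = 1 ∧
      eval v (quarticC F a1 a2) = 0).card : ℤ)
    = Fintype.card F
      + 2 * ∑ x : F, quadraticChar F (-x ^ 3 + 5 * x ^ 2 + 4 * a2 * x + a2 ^ 2 - 4 * a1)
      + ∑ t : F, quadraticChar F (t ^ 4 + (2 * a2 + 4) * t ^ 3 +
          (5 + a2 ^ 2 + 2 * a1 + 6 * a2) * t ^ 2 + (a2 + 2 * a1 * a2 + 6 * a1) * t + (a1 + a1 ^ 2)) := by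
  have h2 : ringChar F ≠ 2 := by rw [ringChar.eq F 7]; norm_num
  have h7 : (7 : F) = 0 := by exact_mod_cast CharP.cast_eq_zero F 7
  have e1 : (Finset.univ.filter fun v : Fin 3 → F => v 0 + v 1 + v 2 = 1 ∧
      eval v (quarticC F a1 a2) = 0).card
      = (Finset.univ.filter fun p : (F × F) × F =>
        p.1.2 ^ 3 + (-1) * p.1.2 ^ 2 + p.1.1 * p.1.2 + 4 * (a1 + a2 * p.1.1 + p.1.1 ^ 2) = 0 ∧
        1 * p.2 ^ 2 + (-1 + p.1.2) * p.2 + (p.1.1 + (-1) * p.1.2 + p.1.2 ^ 2) = 0).card := by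
    refine Finset.card_bij'
      (fun v _ => ((v 0 * v 1 + v 1 * v 2 + v 2 * v 0, v 0), v 1))
      (fun p _ => ![p.1.2, p.2, 1 - p.1.2 - p.2]) ?_ ?_ ?_ ?_
    · intro v hv
      simp only [Finset.mem_filter, Finset.mem_univ, true_and, quarticC, map_add, map_mul, map_pow,
        eval_C, eval_X, map_ofNat] at hv ⊢
      obtain ⟨hv1, hv2⟩ := hv
      have : v 2 = 1 - v 0 - v 1 := by linear_combination hv1
      rw [this] at hv2 ⊢
      clear * - hv2 h7
      constructor
      · linear_combination 4 * hv2 - v 0 * v 1 * (1 - v 0 - v 1) * h7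
      · ring
    · rintro ⟨⟨t, x⟩, y⟩ hp
      simp only [Finset.mem_filter, Finset.mem_univ, true_and, quarticC, map_add, map_mul, map_pow,
        eval_C, eval_X, map_ofNat, Matrix.cons_val] at hp ⊢
      obtain ⟨hp1, hp2⟩ := hp
      refine ⟨by ring, ?_⟩
      have : t = x + y - x ^ 2 - x * y - y ^ 2 := by linear_combination hp2
      rw [this] at hp1
      clear * - hp1 h7
      grind
    · intro v hv
      simp only [Finset.mem_filter, Finset.mem_univ, true_and] at hv
      funext i
      fin_cases i
      · rfl
      · rfl
      · simp; linear_combination -hv.1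
    · rintro ⟨⟨t, x⟩, y⟩ hp
      simp only [Finset.mem_filter, Finset.mem_univ, true_and] at hp
      simp only [Matrix.cons_val, Prod.mk.injEq, and_true]
      linear_combination -hp.2
  -- the number of pairs `(t, x)`, by solving for `t`
  have e2 : ((Finset.univ.filter fun p : F × F =>
      p.2 ^ 3 + (-1) * p.2 ^ 2 + p.1 * p.2 + 4 * (a1 + a2 * p.1 + p.1 ^ 2) = 0).card : ℤ)
      = Fintype.card F
      + ∑ x : F, quadraticChar F (-x ^ 3 + 5 * x ^ 2 + 4 * a2 * x + a2 ^ 2 - 4 * a1) := by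
    have sw : (Finset.univ.filter fun p : F × F =>
        p.2 ^ 3 + (-1) * p.2 ^ 2 + p.1 * p.2 + 4 * (a1 + a2 * p.1 + p.1 ^ 2) = 0).card
        = (Finset.univ.filter fun p : F × F =>
        1 * p.2 ^ 2 + (a2 + 2 * p.1) * p.2 + (a1 - 2 * p.1 ^ 2 + 2 * p.1 ^ 3) = 0).card := by
      refine Finset.card_equiv (Equiv.prodComm F F) ?_
      rintro ⟨t, x⟩
      simp only [Finset.mem_filter, Finset.mem_univ, true_and, Equiv.prodComm_apply, Prod.swap]
      clear * - h7
      constructor <;> intro h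
      · linear_combination 2 * h - (a1 + a2 * t + t ^ 2) * h7
      · linear_combination 4 * h + (-x * t - x ^ 3 + x ^ 2) * h7
    rw [sw, card_pairs (fun x t : F =>
      1 * t ^ 2 + (a2 + 2 * x) * t + (a1 - 2 * x ^ 2 + 2 * x ^ 3) = 0)]
    push_cast
    simp_rw [card_quadratic h2 _ _ _ one_ne_zero]
    rw [Finset.sum_add_distrib, add_comm]
    congr 1
    · simp
    · refine Finset.sum_congr rfl fun x _ => ?_
      congr 1
      linear_combination (x ^ 2 - x ^ 3) * h7
  rw [e1]
  have e3 : ∀ t : F, ∑ x : F, ((Finset.univ.filter fun y : F =>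
        x ^ 3 + (-1) * x ^ 2 + t * x + 4 * (a1 + a2 * t + t ^ 2) = 0 ∧
        1 * y ^ 2 + (-1 + x) * y + (t + (-1) * x + x ^ 2) = 0).card : ℤ)
      = quadraticChar F (t ^ 4 + (2 * a2 + 4) * t ^ 3 +
          (5 + a2 ^ 2 + 2 * a1 + 6 * a2) * t ^ 2 + (a2 + 2 * a1 * a2 + 6 * a1) * t + (a1 + a1 ^ 2))
        + 2 * (Finset.univ.filter fun x : F =>
          x ^ 3 + (-1) * x ^ 2 + t * x + 4 * (a1 + a2 * t + t ^ 2) = 0).card - 1 := by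
    intro t
    have hs := sum_roots_cubic h2 (-1) t (4 * (a1 + a2 * t + t ^ 2))
    have h3 : (3 : F) ≠ 0 := by
      intro h
      have : (1 : F) = 0 := by linear_combination -2 * h + h7
      exact one_ne_zero this
    have hD : (-1) ^ 2 * t ^ 2 - 4 * t ^ 3 - 4 * (-1) ^ 3 * (4 * (a1 + a2 * t + t ^ 2))
        - 27 * (4 * (a1 + a2 * t + t ^ 2)) ^ 2 + 18 * (-1) * t * (4 * (a1 + a2 * t + t ^ 2))
        = 3 ^ 2 * (t ^ 4 + (2 * a2 + 4) * t ^ 3 +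
          (5 + a2 ^ 2 + 2 * a1 + 6 * a2) * t ^ 2 + (a2 + 2 * a1 * a2 + 6 * a1) * t + (a1 + a1 ^ 2)) := by
      clear * - h7
      grind
    rw [hD, map_mul, quadraticChar_sq_one' h3, one_mul] at hs
    have : ∀ x : F, ((Finset.univ.filter fun y : F =>
        x ^ 3 + (-1) * x ^ 2 + t * x + 4 * (a1 + a2 * t + t ^ 2) = 0 ∧
        1 * y ^ 2 + (-1 + x) * y + (t + (-1) * x + x ^ 2) = 0).card : ℤ)
        = if x ^ 3 + (-1) * x ^ 2 + t * x + 4 * (a1 + a2 * t + t ^ 2) = 0 then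
          quadraticChar F ((-1 + x) ^ 2 - 4 * (t + (-1) * x + x ^ 2)) + 1 else 0 := by
      intro x
      split_ifs with hx
      · simp only [hx, true_and]
        rw [card_quadratic h2 _ _ _ one_ne_zero, mul_one]
      · simp only [hx, false_and, Finset.filter_false, Finset.card_empty, Nat.cast_zero]
    rw [Finset.sum_congr rfl fun x _ => this x, ← Finset.sum_filter, Finset.sum_add_distrib, hs]
    simp
    ring
  have e4 := card_pairs (fun t x : F =>
    x ^ 3 + (-1) * x ^ 2 + t * x + 4 * (a1 + a2 * t + t ^ 2) = 0)
  have e5 := card_pairs (fun (p : F × F) (y : F) =>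
      p.2 ^ 3 + (-1) * p.2 ^ 2 + p.1 * p.2 + 4 * (a1 + a2 * p.1 + p.1 ^ 2) = 0 ∧
        1 * y ^ 2 + (-1 + p.2) * y + (p.1 + (-1) * p.2 + p.2 ^ 2) = 0)
  rw [e5]
  push_cast
  rw [Fintype.sum_prod_type, Finset.sum_congr rfl fun t _ => e3 t]
  rw [Finset.sum_sub_distrib, Finset.sum_add_distrib, ← Finset.mul_sum, ← Nat.cast_sum, ← e4, e2]
  simp
  ring

end Count

section Projective

variable {F : Type*} [Field F] [Fintype F]

/-- Besides the points with `T1 = 1`, the quartic has exactly the two rational points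
`[1 : 2 : 4]` and `[1 : 4 : 2]` (2 and 4 being the primitive cube roots of unity), where
`T1 = T2 = 0`. -/
lemma quarticCard_eq [DecidableEq F] [CharP F 7] (a1 a2 : F) :
    quarticCard F (quarticC F a1 a2) = (Finset.univ.filter fun v : Fin 3 → F =>
      v 0 + v 1 + v 2 = 1 ∧ eval v (quarticC F a1 a2) = 0).card + 2 := by
  have h7 : (7 : F) = 0 := by exact_mod_cast CharP.cast_eq_zero F 7
  have h24 : (2 : F) ≠ 4 := by
    intro h
    have : (1 : F) = 0 := by linear_combination 3 * h + h7
    exact one_ne_zero this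
  have ev : ∀ v : Fin 3 → F, eval v (quarticC F a1 a2) = a1 * (v 0 + v 1 + v 2) ^ 4
      + a2 * (v 0 + v 1 + v 2) ^ 2 * (v 0 * v 1 + v 1 * v 2 + v 2 * v 0)
      + 2 * (v 0 + v 1 + v 2) * (v 0 * v 1 * v 2) + (v 0 * v 1 + v 1 * v 2 + v 2 * v 0) ^ 2 := by
    intro v; simp [quarticC]
  have hom : ∀ (u : F) (v : Fin 3 → F), eval (u • v) (quarticC F a1 a2)
      = u ^ 4 * eval v (quarticC F a1 a2) := by
    intro u v; rw [ev, ev]; simp only [Pi.smul_apply, smul_eq_mul]; ring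
  obtain ⟨R, hR⟩ : ∃ R : Finset (Fin 3 → F), R = (Finset.univ.filter fun v : Fin 3 → F =>
      v 0 + v 1 + v 2 = 1 ∧ eval v (quarticC F a1 a2) = 0)
      ∪ {![1, 2, 4], ![1, 4, 2]} := ⟨_, rfl⟩
  have memR : ∀ v, v ∈ R ↔ (v 0 + v 1 + v 2 = 1 ∧ eval v (quarticC F a1 a2) = 0) ∨
      v = ![1, 2, 4] ∨ v = ![1, 4, 2] := by
    intro v
    simp only [hR, Finset.mem_union, Finset.mem_filter, Finset.mem_univ, true_and,
      Finset.mem_insert, Finset.mem_singleton]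
  have s1 : (1 : F) + 2 + 4 = 0 := by linear_combination h7
  have s2 : (1 : F) + 4 + 2 = 0 := by linear_combination h7
  have cardR : R.card = (Finset.univ.filter fun v : Fin 3 → F =>
      v 0 + v 1 + v 2 = 1 ∧ eval v (quarticC F a1 a2) = 0).card + 2 := by
    rw [hR, Finset.card_union_of_disjoint, Finset.card_pair]
    · intro h
      exact h24 (by simpa using congrFun h 1)
    · rw [Finset.disjoint_right]
      intro v hv hv'
      simp only [Finset.mem_insert, Finset.mem_singleton, Finset.mem_filter, Finset.mem_univ,
        true_and] at hv hv'
      rcases hv with rfl | rfl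
      · exact zero_ne_one (s1.symm.trans (by simpa using hv'.1))
      · exact zero_ne_one (s2.symm.trans (by simpa using hv'.1))
  have evR : ∀ v ∈ R, v ≠ 0 ∧ eval v (quarticC F a1 a2) = 0 := by
    intro v hv
    rcases (memR v).mp hv with ⟨h1, h0⟩ | rfl | rfl
    · refine ⟨?_, h0⟩
      rintro rfl
      simp at h1
    · refine ⟨fun h => one_ne_zero (by simpa using congrFun h 0 : (1 : F) = 0), ?_⟩
      rw [ev]
      simp only [Matrix.cons_val, s1]
      linear_combination 28 * h7
    · refine ⟨fun h => one_ne_zero (by simpa using congrFun h 0 : (1 : F) = 0), ?_⟩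
      rw [ev]
      simp only [Matrix.cons_val, s2]
      linear_combination 28 * h7
  have repz : ∀ (v : Fin 3 → F) (hv : v ≠ 0),
      eval (Projectivization.mk F v hv).rep (quarticC F a1 a2) = 0
        ↔ eval v (quarticC F a1 a2) = 0 := by
    intro v hv
    obtain ⟨u, hu⟩ := Projectivization.exists_smul_eq_mk_rep F v hv
    rw [← hu, Units.smul_def, hom, mul_eq_zero]
    simp
  rw [← cardR, quarticCard, ← Fintype.card_coe R, ← Nat.card_eq_fintype_card]
  symm
  refine Nat.card_eq_of_bijective (fun v : {v // v ∈ R} =>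
    (⟨Projectivization.mk F v.1 (evR v.1 v.2).1, (repz _ _).mpr (evR v.1 v.2).2⟩ :
      {P : Projectivization F (Fin 3 → F) // eval P.rep (quarticC F a1 a2) = 0})) ⟨?_, ?_⟩
  · rintro ⟨v, hv⟩ ⟨w, hw⟩ h
    rw [Subtype.mk.injEq, Projectivization.mk_eq_mk_iff'] at h
    obtain ⟨c, rfl⟩ := h
    have hc : c = 1 := by
      rcases (memR _).mp hv with ⟨h1, -⟩ | h1 | h1 <;> rcases (memR w).mp hw with ⟨h2, -⟩ | rfl | rfl
      · simp only [Pi.smul_apply, smul_eq_mul] at h1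
        linear_combination h1 - c * h2
      · exfalso
        simp only [Pi.smul_apply, smul_eq_mul, Matrix.cons_val] at h1
        exact zero_ne_one (by linear_combination h1 - c * h7 : (0 : F) = 1)
      · exfalso
        simp only [Pi.smul_apply, smul_eq_mul, Matrix.cons_val] at h1
        exact zero_ne_one (by linear_combination h1 - c * h7 : (0 : F) = 1)
      · have g0 : c * w 0 = 1 := by simpa using congrFun h1 0
        have g1 : c * w 1 = 2 := by simpa using congrFun h1 1
        have g2 : c * w 2 = 4 := by simpa using congrFun h1 2
        have : c = 0 := by linear_combination g0 + g1 + g2 - c * h2 + h7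
        rw [this, zero_mul] at g0
        exact absurd g0 zero_ne_one
      · simpa using congrFun h1 0
      · simpa using congrFun h1 0
      · have g0 : c * w 0 = 1 := by simpa using congrFun h1 0
        have g1 : c * w 1 = 4 := by simpa using congrFun h1 1
        have g2 : c * w 2 = 2 := by simpa using congrFun h1 2
        have : c = 0 := by linear_combination g0 + g1 + g2 - c * h2 + h7
        rw [this, zero_mul] at g0
        exact absurd g0 zero_ne_one
      · simpa using congrFun h1 0
      · simpa using congrFun h1 0
    simp [hc]
  · rintro ⟨P, hP⟩
    induction P using Projectivization.ind with
    | h v hv =>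
    have h0 := (repz v hv).mp hP
    suffices ∃ c : F, c • v ∈ R by
      obtain ⟨c, hc⟩ := this
      refine ⟨⟨c • v, hc⟩, Subtype.ext ?_⟩
      exact (Projectivization.mk_eq_mk_iff' F _ _ _ _).mpr ⟨c, rfl⟩
    by_cases ht : v 0 + v 1 + v 2 = 0
    · have hT2 : v 0 * v 1 + v 1 * v 2 + v 2 * v 0 = 0 := by
        rw [ev, ht] at h0
        exact pow_eq_zero_iff (two_ne_zero) |>.mp (by linear_combination h0)
      have hz : v 2 = -v 0 - v 1 := by linear_combination ht
      have hf : (v 1 - 2 * v 0) * (v 1 - 4 * v 0) = 0 := by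
        rw [hz] at hT2
        linear_combination -hT2 + (v 0 ^ 2 - v 0 * v 1) * h7
      have hv0 : v 0 ≠ 0 := by
        intro h
        apply hv
        have h1 : v 1 = 0 := by
          rw [h] at hf
          exact pow_eq_zero_iff (two_ne_zero) |>.mp (by linear_combination hf)
        have h2 : v 2 = 0 := by rw [hz, h, h1]; ring
        funext i
        fin_cases i
        · exact h
        · exact h1
        · exact h2
      refine ⟨(v 0)⁻¹, (memR _).mpr (Or.inr ?_)⟩
      rcases mul_eq_zero.mp hf with h | h
      · left
        have h1 : v 1 = 2 * v 0 := by linear_combination h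
        have h2 : v 2 = 4 * v 0 := by rw [hz, h1]; linear_combination -v 0 * h7
        funext i
        fin_cases i <;> simp [h1, h2] <;> field_simp
      · right
        have h1 : v 1 = 4 * v 0 := by linear_combination h
        have h2 : v 2 = 2 * v 0 := by rw [hz, h1]; linear_combination -v 0 * h7
        funext i
        fin_cases i <;> simp [h1, h2] <;> field_simp
    · refine ⟨(v 0 + v 1 + v 2)⁻¹, (memR _).mpr (Or.inl ⟨?_, ?_⟩)⟩
      · simp only [Pi.smul_apply, smul_eq_mul]
        field_simp
      · rw [hom, h0, mul_zero]

end Projective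


/-! ### Smoothness -/

section Smooth

variable {K : Type*} [Field K] [CharP K 7]

/-- At a singular point `(x, x, 1 - 2x)` of the quartic with `x ≠ 1 - 2x`, the repeated coordinate
is a double root of the cubic `-x³ + 5 x² + 4 a₂ x + a₂² - 4 a₁`. Its short form has coefficients
`1 + 3 a₂` and `2 + 2 a₂ + a₂² - 4 a₁`, so the discriminant below vanishes. -/
lemma disc_zero_of_double (a1 a2 x : K) (h1 : a2 + 2 * (2 * x - 3 * x ^ 2) + 2 * x = 0)
    (h2 : a1 + a2 * (2 * x - 3 * x ^ 2) + 2 * (x ^ 2 * (1 - 2 * x)) + (2 * x - 3 * x ^ 2) ^ 2 = 0) :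
    4 * (1 + 3 * a2) ^ 3 + 27 * (2 + 2 * a2 + a2 ^ 2 - 4 * a1) ^ 2 = 0 := by
  have e2 : a2 = -(2 * (2 * x - 3 * x ^ 2) + 2 * x) := by linear_combination h1
  have e1 : a1 = -(a2 * (2 * x - 3 * x ^ 2) + 2 * (x ^ 2 * (1 - 2 * x))
    + (2 * x - 3 * x ^ 2) ^ 2) := by linear_combination h2
  rw [e1, e2]
  clear h1 h2 e1 e2
  grind

/-- There is no singular point with `T1 = 1`. The differences of the partial derivatives factor as in
`hxy`, `hyz`, `hzx`. They force two coordinates to agree; if all three do, the point is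
`(1/3, 1/3, 1/3)`, where the quartic takes the value in `hc` divided by 81. -/
lemma no_singular_normalized (a1 a2 x y z : K) (hc : 81 * a1 + 27 * a2 + 15 ≠ 0)
    (hd : 4 * (1 + 3 * a2) ^ 3 + 27 * (2 + 2 * a2 + a2 ^ 2 - 4 * a1) ^ 2 ≠ 0)
    (ht : x + y + z = 1)
    (hq : a1 + a2 * (x * y + y * z + z * x) + 2 * (x * y * z) + (x * y + y * z + z * x) ^ 2 = 0)
    (hxy : (x - y) * (a2 + 2 * (x * y + y * z + z * x) + 2 * z) = 0)
    (hyz : (y - z) * (a2 + 2 * (x * y + y * z + z * x) + 2 * x) = 0)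
    (hzx : (z - x) * (a2 + 2 * (x * y + y * z + z * x) + 2 * y) = 0) : False := by
  have h7 : (7 : K) = 0 := by exact_mod_cast CharP.cast_eq_zero K 7
  have h2 : (2 : K) ≠ 0 := by
    intro h
    exact one_ne_zero (by linear_combination -3 * h + h7 : (1 : K) = 0)
  have hz : z = 1 - x - y := by linear_combination ht
  subst hz
  rcases mul_eq_zero.mp hxy with e1 | e1
  · have e1' : y = x := by linear_combination -e1
    subst e1'
    rcases mul_eq_zero.mp hyz with e2 | e2
    · apply hc
      have hy : y = 5 := by linear_combination -2 * e2 + (y - 1) * h7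
      rw [hy] at hq
      clear * - hq h7
      grind
    · exact hd (disc_zero_of_double a1 a2 y (by linear_combination e2) (by linear_combination hq))
  · rcases mul_eq_zero.mp hyz with e2 | e2
    · have hx : x = 1 - 2 * y := by linear_combination e2
      subst hx
      rcases mul_eq_zero.mp hzx with e3 | e3
      · apply hc
        have hy : y = 5 := by linear_combination 5 * e3 + (-2 * y) * h7
        rw [hy] at hq
        clear * - hq h7
        grind
      · exact hd (disc_zero_of_double a1 a2 y (by linear_combination e3)
          (by linear_combination hq))
    · rcases mul_eq_zero.mp hzx with e3 | e3
      · have hy : y = 1 - 2 * x := by linear_combination -e3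
        subst hy
        exact hd (disc_zero_of_double a1 a2 x (by linear_combination e1)
          (by linear_combination hq))
      · have e4 : 2 * (x - y) = 0 := by linear_combination e2 - e3
        have e5 : y = x := by linear_combination -(mul_eq_zero.mp e4).resolve_left h2
        subst e5
        exact hd (disc_zero_of_double a1 a2 y (by linear_combination e2)
          (by linear_combination hq))

/-- A singular point with `T1 = 0` has `T2 = T3 = 0`; one with `T1 ≠ 0` can be scaled to `T1 = 1`.
The hypotheses `hx`, `hy`, `hz` say that the partial derivatives of the quartic in
`hq` vanish. -/
lemma no_singular (a1 a2 x y z : K) (hc : 81 * a1 + 27 * a2 + 15 ≠ 0)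
    (hd : 4 * (1 + 3 * a2) ^ 3 + 27 * (2 + 2 * a2 + a2 ^ 2 - 4 * a1) ^ 2 ≠ 0)
    (T1 T2 T3 : K) (h1 : T1 = x + y + z) (h2 : T2 = x * y + y * z + z * x) (h3 : T3 = x * y * z)
    (hq : a1 * T1 ^ 4 + a2 * T1 ^ 2 * T2 + 2 * T1 * T3 + T2 ^ 2 = 0)
    (hx : 4 * a1 * T1 ^ 3 + 2 * a2 * T1 * T2 + 2 * T3 + (a2 * T1 ^ 2 + 2 * T2) * (y + z)
      + 2 * T1 * (y * z) = 0)
    (hy : 4 * a1 * T1 ^ 3 + 2 * a2 * T1 * T2 + 2 * T3 + (a2 * T1 ^ 2 + 2 * T2) * (z + x)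
      + 2 * T1 * (z * x) = 0)
    (hz : 4 * a1 * T1 ^ 3 + 2 * a2 * T1 * T2 + 2 * T3 + (a2 * T1 ^ 2 + 2 * T2) * (x + y)
      + 2 * T1 * (x * y) = 0) : x = 0 ∧ y = 0 ∧ z = 0 := by
  have h7 : (7 : K) = 0 := by exact_mod_cast CharP.cast_eq_zero K 7
  by_cases ht : T1 = 0
  · rw [ht] at hq hx h1
    have hT2 : T2 = 0 := pow_eq_zero_iff (two_ne_zero) |>.mp (by linear_combination hq)
    rw [hT2] at hx h2
    have hT3 : T3 = 0 := by linear_combination 4 * hx - T3 * h7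
    rw [hT3] at h3
    -- each coordinate is a root of `X³ - T1 X² + T2 X - T3`
    have root : ∀ w : K, (w - x) * (w - y) * (w - z) = 0 → w = 0 := fun w hw =>
      pow_eq_zero_iff (three_ne_zero) |>.mp
        (by linear_combination hw - w ^ 2 * h1 + w * h2 - h3 : w ^ 3 = 0)
    exact ⟨root x (by ring), root y (by ring), root z (by ring)⟩
  · exfalso
    obtain ⟨i, hi⟩ : ∃ i, i * T1 = 1 := ⟨T1⁻¹, inv_mul_cancel₀ ht⟩
    rw [h3, h2] at hq hx hy hz
    clear h2 h3
    have hi' : i * x + i * y + i * z = 1 := by rw [← hi, h1]; ring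
    have hq' : i ^ 4 * (a1 * T1 ^ 4 + a2 * T1 ^ 2 * (x * y + y * z + z * x)
        + 2 * T1 * (x * y * z) + (x * y + y * z + z * x) ^ 2)
        = a1 * (i * T1) ^ 4 + a2 * (i * T1) ^ 2 * (i ^ 2 * (x * y + y * z + z * x))
        + 2 * (i * T1) * (i ^ 3 * (x * y * z)) + (i ^ 2 * (x * y + y * z + z * x)) ^ 2 := by ring
    have hf : ∀ x y z : K, (x - y) * (a2 * T1 ^ 2 + 2 * (x * y + y * z + z * x) + 2 * T1 * z) = 0 →
        (i * x - i * y) * (a2 + 2 * (i * x * (i * y) + i * y * (i * z) + i * z * (i * x))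
          + 2 * (i * z)) = 0 := by
      intro x y z h
      have e : i ^ 3 * ((x - y) * (a2 * T1 ^ 2 + 2 * (x * y + y * z + z * x) + 2 * T1 * z))
        = (i * x - i * y) * (a2 * (i * T1) ^ 2
          + 2 * (i * x * (i * y) + i * y * (i * z) + i * z * (i * x))
          + 2 * (i * T1) * (i * z)) := by ring
      rw [h, hi] at e
      linear_combination -e
    rw [hq, hi] at hq'
    refine no_singular_normalized a1 a2 (i * x) (i * y) (i * z) hc hd hi'
      (by linear_combination -hq') (hf x y z ?_) ?_ ?_
    · linear_combination hy - hx
    · have := hf y z x (by linear_combination hz - hy)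
      linear_combination this
    · have := hf z x y (by linear_combination hx - hz)
      linear_combination this

lemma smooth_of_params {F : Type*} [Field F] [CharP F 7] (a1 a2 : F)
    (hc : 81 * a1 + 27 * a2 + 15 ≠ 0)
    (hd : 4 * (1 + 3 * a2) ^ 3 + 27 * (2 + 2 * a2 + a2 ^ 2 - 4 * a1) ^ 2 ≠ 0) :
    QuarticSmooth F (quarticC F a1 a2) := by
  rintro ⟨v, hv, h0, hi⟩
  have : CharP (AlgebraicClosure F) 7 := charP_of_injective_algebraMap' F 7
  have inj : Function.Injective (algebraMap F (AlgebraicClosure F)) :=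
    (algebraMap F (AlgebraicClosure F)).injective
  have p2 : ∀ i : Fin 3, pderiv i (2 : MvPolynomial (Fin 3) F) = 0 := fun i => by
    simpa using (pderiv i).map_natCast 2
  have hx := hi 0
  have hy := hi 1
  have hz := hi 2
  simp [quarticC, p2, pderiv_X, Derivation.leibniz_pow] at h0 hx hy hz
  apply hv
  obtain ⟨e0, e1, e2⟩ := no_singular (algebraMap F (AlgebraicClosure F) a1)
    (algebraMap F (AlgebraicClosure F) a2) (v 0) (v 1) (v 2)
    (fun h => hc (inj (by simpa only [map_add, map_mul, map_ofNat, map_zero] using h)))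
    (fun h => hd (inj (by
      simpa only [map_add, map_sub, map_mul, map_pow, map_one, map_ofNat, map_zero] using h)))
    _ _ _ rfl rfl rfl (by linear_combination h0) (by linear_combination hx)
    (by linear_combination hy) (by linear_combination hz)
  funext i
  fin_cases i
  · exact e0
  · exact e1
  · exact e2

end Smooth

theorem stmt_11 (n : ℕ) (hn : Odd n) (hpos : 0 < n) (q : ℕ) (hq : q = 7 ^ n)
    (F : Type*) [Field F] [Fintype F] (hF : Fintype.card F = q)
    (E : WeierstrassCurve F) (hE : E.Δ ≠ 0)
    (N : ℕ) (hN : N = Nat.card E.toAffine.Point)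
    (a : ℤ) (ha : a = (q : ℤ) + 1 - N)
    (hamod : a % 21 = 9 ∨ a % 21 = 15 ∨ a % 21 = 18) :
    ∃ a1 a2 : F, QuarticSmooth F (quarticC F a1 a2) ∧
      (quarticCard F (quarticC F a1 a2) : ℤ) = (q : ℤ) + 1 - 3 * a := by
  classical
  have hF' : Fintype.card F = 7 ^ n := hF.trans hq
  have : Fact (Nat.Prime 7) := ⟨by norm_num⟩
  have : CharP F 7 := charP_of_card_eq_prime_pow hF'
  have h2 : ringChar F ≠ 2 := by rw [ringChar.eq F 7]; norm_num
  obtain ⟨A, B, hΔ, hsum⟩ := short_form E hE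
  have hpts := card_points h2 E hE
  rw [hsum, ← hN, hF] at hpts
  have hS : ∑ x : F, quadraticChar F (x ^ 3 + A * x + B) = -a := by linarith
  obtain ⟨b, hb, hB⟩ := neg_B_isSquare n hpos hF' A B a (by rw [hS, neg_neg]) (by omega)
  have hB0 : B ≠ 0 := by rw [hB]; exact neg_ne_zero.mpr (pow_ne_zero 2 hb)
  obtain ⟨α, hα⟩ := exists_resolvent n hn hF' A B hΔ hB0 (by rw [hS]; omega)
  obtain ⟨a1, a2, hc, hd, hS2, hS1⟩ := exists_params A B b α hb hB hΔ hα
  refine ⟨a1, a2, smooth_of_params a1 a2 hc hd, ?_⟩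
  have hcard := card_affine a1 a2
  rw [quarticCard_eq, Nat.cast_add, hcard, hS2, hS1, hS, hF]
  push_cast
  ring
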